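/- Let N and L be positive integers, let c > 0, and for each i ∈ {1, …, L} let a_i be a positive integer, b_i > 0, and let Ξ(i, k) ∈ ℝ for 1 ≤ k ≤ a_i. Define f : [c, ∞) → ℝ by f(y) = Σ_{i=1}^{L} Σ_{k=1}^{a_i} Ξ(i, k) (y−c)^{k−1} exp(−(y−c)/b_i) / (b_i^k (k−1)!), and assume ∫_c^∞ f(y) dy = 1. Then for every x > 0, ∫_c^∞ [γ(N, N x/(2y))/(N−1)!] f(y) dy = 1 − Σ_{n=0}^{N−1} Σ_{i=1}^{L} Σ_{k=1}^{a_i} Σ_{j=0}^{k−1} [(−c)^{k−1−j} Ξ(i, k) / (n! b_i^{k+n−j−1} (k−1)!)] C(k−1, j) (N x/2)^n e^{c/b_i} Γ(−n+j+1, c/b_i; N x/(2 b_i)), where γ(s, t) = ∫₀^t u^{s−1} e^{−u} du is the lower incomplete Gamma function, C(k−1, j) is the binomial coefficient, and Γ(s, x; B) := ∫_x^∞ t^{s−1} exp(−t − B/t) dt is the extended incomplete Gamma function. -/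

import Mathlib

open MeasureTheory

/-- The extended incomplete Gamma function
`Γ(s, x; B) = ∫ₓ^∞ t ^ (s - 1) exp (-t - B/t) dt`. -/
noncomputable def extGamma (s x B : ℝ) : ℝ :=
  ∫ t in Set.Ioi x, t ^ (s - 1) * Real.exp (-t - B / t)

/-- The lower incomplete Gamma function at a positive integer shape,
`γ(N, t) = ∫₀ᵗ u ^ (N - 1) exp (-u) du`. -/
noncomputable def lowGamma (N : ℕ) (t : ℝ) : ℝ :=
  ∫ u in (0:ℝ)..t, u ^ (N - 1) * Real.exp (-u)

/-!
Expanding `γ(N, t) / (N - 1)!` as `1 - ∑_{n < N} e^{-t} tⁿ / n!` reduces the claim to integrating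
the Poisson weight `e^{-A/y} (A/y)ⁿ / n!` against each Erlang component of `f`. The binomial theorem
for `(y - c) ^ (k - 1)` turns every such integrand into a linear combination of the functions
`y ^ (s - 1) exp (-y / b - A / y)`, whose integrals over `(c, ∞)` are extended incomplete Gamma
functions after the substitution `y = b t`.
-/

section

open Real Set Filter Asymptotics Topology
open scoped Nat

/-- The probability `e^{-t} tⁿ / n!` that a Poisson variable of mean `t` equals `n`, as a function
of an arbitrary real `t`; these are the summands of the regularized incomplete Gamma function. -/
noncomputable def poissonWeight (n : ℕ) (t : ℝ) : ℝ :=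
  exp (-t) * t ^ n / n !

/-- The density at `y > c` of the Erlang distribution of shape `k ≥ 1` and scale `b`, translated to
start at `c`. It is not cut off to `0` for `y < c`, since it is only integrated over `(c, ∞)`. -/
noncomputable def shiftedErlangPDF (c b : ℝ) (k : ℕ) (y : ℝ) : ℝ :=
  (y - c) ^ (k - 1) * exp (-(y - c) / b) / (b ^ k * (k - 1)!)

lemma lowGamma_one (t : ℝ) : lowGamma 1 t = 1 - exp (-t) := by
  simp [lowGamma]

lemma lowGamma_add_two (n : ℕ) (t : ℝ) :
    lowGamma (n + 2) t = (n + 1) * lowGamma (n + 1) t - t ^ (n + 1) * exp (-t) := by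
  have hderiv (u : ℝ) : HasDerivAt (fun u : ℝ ↦ -(u ^ (n + 1) * exp (-u)))
      (u ^ (n + 1) * exp (-u) - (n + 1) * (u ^ n * exp (-u))) u := by
    refine ((hasDerivAt_pow (n + 1) u).mul (hasDerivAt_neg u).exp).neg.congr_deriv ?_
    push_cast
    ring
  have hFTC := intervalIntegral.integral_eq_sub_of_hasDerivAt (a := 0) (b := t)
    (fun u _ ↦ hderiv u) (Continuous.intervalIntegrable (by fun_prop) _ _)
  rw [intervalIntegral.integral_sub (Continuous.intervalIntegrable (by fun_prop) _ _)
    (Continuous.intervalIntegrable (by fun_prop) _ _), intervalIntegral.integral_const_mul,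
    zero_pow n.succ_ne_zero] at hFTC
  simp only [lowGamma, Nat.add_sub_cancel, Nat.reduceSubDiff]
  linarith

lemma lowGamma_div_factorial {N : ℕ} (hN : 0 < N) (t : ℝ) :
    lowGamma N t / (N - 1)! = 1 - ∑ n ∈ Finset.range N, poissonWeight n t := by
  induction N, hN using Nat.le_induction with
  | base => simp [lowGamma_one, poissonWeight]
  | succ N hN ih =>
    obtain ⟨m, rfl⟩ := Nat.exists_eq_add_of_le' hN
    rw [Finset.sum_range_succ, ← sub_sub, ← ih, lowGamma_add_two, poissonWeight]
    simp only [Nat.add_sub_cancel, Nat.factorial_succ, Nat.cast_mul, Nat.cast_add, Nat.cast_one]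
    field_simp

lemma integral_lowGamma_div_factorial_mul {α : Type*} [MeasurableSpace α] {μ : Measure α} {N : ℕ}
    (hN : 0 < N) {t f : α → ℝ} (hf : Integrable f μ)
    (hint : ∀ n ∈ Finset.range N, Integrable (fun y ↦ poissonWeight n (t y) * f y) μ) :
    ∫ y, lowGamma N (t y) / (N - 1)! * f y ∂μ
      = ∫ y, f y ∂μ - ∑ n ∈ Finset.range N, ∫ y, poissonWeight n (t y) * f y ∂μ := by
  simp_rw [lowGamma_div_factorial hN, sub_mul, one_mul, Finset.sum_mul]
  rw [integral_sub hf (integrable_finsetSum _ hint), integral_finsetSum _ hint]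

lemma integrableOn_extGamma_integrand (s : ℝ) {x : ℝ} (hx : 0 < x) (B : ℝ) :
    IntegrableOn (fun t ↦ t ^ (s - 1) * exp (-t - B / t)) (Ioi x) := by
  have hpos {t : ℝ} (ht : t ∈ Ici x) : t ≠ 0 := (hx.trans_le ht).ne'
  refine integrable_of_isBigO_exp_neg (b := 1 / 2) one_half_pos ?_ ?_
  · exact (continuousOn_id.rpow_const fun t ht ↦ .inl (hpos ht)).mul
      (continuousOn_id.neg.sub (continuousOn_const.div continuousOn_id fun t ht ↦ hpos ht)).rexp
  · have hpow : (fun t : ℝ ↦ t ^ (s - 1)) =O[atTop] fun t ↦ exp (1 / 2 * t) :=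
      (isLittleO_rpow_exp_pos_mul_atTop (s - 1) one_half_pos).isBigO
    have hlim : Tendsto (fun t ↦ exp (-(B / t))) atTop (𝓝 (exp (-0))) :=
      ((tendsto_const_nhds.div_atTop tendsto_id).neg).rexp
    refine ((hpow.mul (isBigO_refl (fun t ↦ exp (-t)) _)).mul (hlim.isBigO_one ℝ)).congr
      (fun t ↦ ?_) fun t ↦ ?_
    · rw [mul_assoc, ← exp_add, ← sub_eq_add_neg]
    · rw [mul_one, ← exp_add]
      ring_nf

section Scaling

variable {b : ℝ} (hb : 0 < b) (s A : ℝ)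
include hb

lemma rpow_mul_exp_comp_mul_left {t : ℝ} (ht : 0 ≤ t) :
    (b * t) ^ (s - 1) * exp (-(b * t) / b - A / (b * t))
      = b ^ (s - 1) * (t ^ (s - 1) * exp (-t - A / b / t)) := by
  rw [mul_rpow hb.le ht, mul_assoc, neg_div, mul_div_cancel_left₀ t hb.ne', div_div]

lemma integrableOn_rpow_mul_exp_neg_div_sub_div {c : ℝ} (hc : 0 < c) :
    IntegrableOn (fun y ↦ y ^ (s - 1) * exp (-y / b - A / y)) (Ioi c) := by
  have hcb : 0 < c / b := div_pos hc hb
  rw [← mul_div_cancel₀ c hb.ne', ← integrableOn_Ioi_comp_mul_left_iff _ _ hb]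
  refine IntegrableOn.congr_fun
    ((integrableOn_extGamma_integrand s hcb (A / b)).const_mul (b ^ (s - 1))) (fun t ht ↦ ?_)
    measurableSet_Ioi
  exact (rpow_mul_exp_comp_mul_left hb s A (hcb.trans ht).le).symm

lemma integral_Ioi_rpow_mul_exp_neg_div_sub_div {c : ℝ} (hc : 0 ≤ c) :
    ∫ y in Ioi c, y ^ (s - 1) * exp (-y / b - A / y) = b ^ s * extGamma s (c / b) (A / b) := by
  have hcb : 0 ≤ c / b := div_nonneg hc hb.le
  calc ∫ y in Ioi c, y ^ (s - 1) * exp (-y / b - A / y)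
      = b * ∫ t in Ioi (c / b), (b * t) ^ (s - 1) * exp (-(b * t) / b - A / (b * t)) := by
        rw [integral_comp_mul_left_Ioi (fun y ↦ y ^ (s - 1) * exp (-y / b - A / y)) _ hb,
          mul_div_cancel₀ c hb.ne', smul_eq_mul, mul_inv_cancel_left₀ hb.ne']
    _ = b * (b ^ (s - 1) * extGamma s (c / b) (A / b)) := by
        rw [extGamma]
        congr 1
        rw [← integral_const_mul]
        exact setIntegral_congr_fun measurableSet_Ioi fun t ht ↦
          rpow_mul_exp_comp_mul_left hb s A (hcb.trans (mem_Ioi.1 ht).le)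
    _ = b ^ s * extGamma s (c / b) (A / b) := by
        rw [← mul_assoc, rpow_sub_one hb.ne', mul_div_cancel₀ _ hb.ne']

end Scaling

lemma shiftedErlangPDF_eq_sum (c b : ℝ) {k : ℕ} (hk : 0 < k) (y : ℝ) :
    shiftedErlangPDF c b k y = ∑ j ∈ Finset.range k,
      (-c) ^ (k - 1 - j) * (k - 1).choose j * exp (c / b) / (b ^ k * (k - 1)!)
        * (y ^ j * exp (-y / b)) := by
  have hexp : exp (-(y - c) / b) = exp (c / b) * exp (-y / b) := by
    rw [← exp_add]
    ring_nf
  rw [shiftedErlangPDF, sub_eq_add_neg, add_pow, Nat.sub_add_cancel hk, ← sub_eq_add_neg, hexp,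
    Finset.sum_mul, Finset.sum_div]
  exact Finset.sum_congr rfl fun j _ ↦ by ring

lemma poissonWeight_div_mul_pow_mul_exp (n j : ℕ) (A b : ℝ) {y : ℝ} (hy : 0 < y) :
    poissonWeight n (A / y) * (y ^ j * exp (-y / b))
      = A ^ n / n ! * (y ^ (-(n : ℝ) + j + 1 - 1) * exp (-y / b - A / y)) := by
  rw [poissonWeight, add_sub_cancel_right, rpow_add hy, rpow_neg hy.le, rpow_natCast, rpow_natCast,
    sub_eq_add_neg, exp_add, div_pow]
  ring

lemma poissonWeight_div_mul_shiftedErlangPDF (c b : ℝ) {k : ℕ} (hk : 0 < k) (n : ℕ) (A : ℝ) {y : ℝ}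
    (hy : 0 < y) :
    poissonWeight n (A / y) * shiftedErlangPDF c b k y = ∑ j ∈ Finset.range k,
      (-c) ^ (k - 1 - j) * (k - 1).choose j * exp (c / b) / (b ^ k * (k - 1)!) * (A ^ n / n !)
        * (y ^ (-(n : ℝ) + j + 1 - 1) * exp (-y / b - A / y)) := by
  rw [shiftedErlangPDF_eq_sum c b hk, Finset.mul_sum]
  refine Finset.sum_congr rfl fun j _ ↦ ?_
  rw [mul_left_comm, poissonWeight_div_mul_pow_mul_exp n j A b hy, ← mul_assoc]

section Component

variable {c b : ℝ} (hc : 0 < c) (hb : 0 < b) {k : ℕ} (hk : 0 < k) (n : ℕ) (A : ℝ)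
include hc hb hk

lemma integrableOn_poissonWeight_div_mul_shiftedErlangPDF :
    IntegrableOn (fun y ↦ poissonWeight n (A / y) * shiftedErlangPDF c b k y) (Ioi c) := by
  refine (integrableOn_congr_fun (fun y hy ↦ poissonWeight_div_mul_shiftedErlangPDF c b hk n A
    (hc.trans hy)) measurableSet_Ioi).2 ?_
  exact integrable_finsetSum _ fun j _ ↦
    (integrableOn_rpow_mul_exp_neg_div_sub_div hb _ A hc).const_mul _

lemma integral_poissonWeight_div_mul_shiftedErlangPDF :
    ∫ y in Ioi c, poissonWeight n (A / y) * shiftedErlangPDF c b k y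
      = ∑ j ∈ Finset.range k,
        (-c) ^ (k - 1 - j) / (n ! * b ^ ((k : ℤ) + n - j - 1) * (k - 1)!) * (k - 1).choose j
          * A ^ n * exp (c / b) * extGamma (-(n : ℝ) + j + 1) (c / b) (A / b) := by
  rw [setIntegral_congr_fun measurableSet_Ioi fun y hy ↦
      poissonWeight_div_mul_shiftedErlangPDF c b hk n A (hc.trans hy),
    integral_finsetSum _ fun j _ ↦
      (integrableOn_rpow_mul_exp_neg_div_sub_div hb (-(n : ℝ) + (j : ℕ) + 1) A hc).const_mul _]
  refine Finset.sum_congr rfl fun j _ ↦ ?_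
  have hpow : b ^ (-(n : ℝ) + j + 1) = b ^ k / b ^ ((k : ℤ) + n - j - 1) := by
    rw [← zpow_natCast, ← zpow_sub₀ hb.ne', ← rpow_intCast]
    push_cast
    ring_nf
  rw [integral_const_mul, integral_Ioi_rpow_mul_exp_neg_div_sub_div hb _ A hc.le, hpow]
  field_simp

end Component

/-- The mixed Gamma density at `y > c`, with components indexed by a source `i` and a shape
`1 ≤ k ≤ a i`, scales `b i` and weights `Ξ i k`; the weights may be negative, as partial-fraction
coefficients are. -/
noncomputable def shiftedErlangMixture {ι : Type*} [Fintype ι] (c : ℝ) (a : ι → ℕ) (b : ι → ℝ)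
    (Ξ : ι → ℕ → ℝ) (y : ℝ) : ℝ :=
  ∑ i, ∑ k ∈ Finset.Icc 1 (a i), Ξ i k * shiftedErlangPDF c (b i) k y

lemma poissonWeight_mul_shiftedErlangMixture {ι : Type*} [Fintype ι] (c : ℝ) (a : ι → ℕ) (b : ι → ℝ)
    (Ξ : ι → ℕ → ℝ) (n : ℕ) (t y : ℝ) :
    poissonWeight n t * shiftedErlangMixture c a b Ξ y = ∑ i, ∑ k ∈ Finset.Icc 1 (a i),
      Ξ i k * (poissonWeight n t * shiftedErlangPDF c (b i) k y) := by
  simp only [shiftedErlangMixture, Finset.mul_sum, mul_left_comm]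

section Mixture

variable {ι : Type*} [Fintype ι] {c : ℝ} (hc : 0 < c) (a : ι → ℕ) {b : ι → ℝ} (hb : ∀ i, 0 < b i)
  (Ξ : ι → ℕ → ℝ)
include hc hb

lemma integrableOn_poissonWeight_div_mul_shiftedErlangMixture (n : ℕ) (A : ℝ) :
    IntegrableOn (fun y ↦ poissonWeight n (A / y) * shiftedErlangMixture c a b Ξ y) (Ioi c) := by
  simp only [poissonWeight_mul_shiftedErlangMixture]
  exact integrable_finsetSum _ fun i _ ↦ integrable_finsetSum _ fun k hk ↦
    (integrableOn_poissonWeight_div_mul_shiftedErlangPDF hc (hb i) (Finset.mem_Icc.1 hk).1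
      n A).const_mul _

lemma integrableOn_shiftedErlangMixture : IntegrableOn (shiftedErlangMixture c a b Ξ) (Ioi c) := by
  simpa [poissonWeight] using
    integrableOn_poissonWeight_div_mul_shiftedErlangMixture hc a hb Ξ 0 0

lemma integral_poissonWeight_div_mul_shiftedErlangMixture (n : ℕ) (A : ℝ) :
    ∫ y in Ioi c, poissonWeight n (A / y) * shiftedErlangMixture c a b Ξ y
      = ∑ i, ∑ k ∈ Finset.Icc 1 (a i),
        Ξ i k * ∫ y in Ioi c, poissonWeight n (A / y) * shiftedErlangPDF c (b i) k y := by
  have hint (i : ι) (k : ℕ) (hk : k ∈ Finset.Icc 1 (a i)) :=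
    (integrableOn_poissonWeight_div_mul_shiftedErlangPDF hc (hb i) (Finset.mem_Icc.1 hk).1
      n A).const_mul (Ξ i k)
  simp only [poissonWeight_mul_shiftedErlangMixture]
  rw [integral_finsetSum _ fun i _ ↦ integrable_finsetSum _ (hint i)]
  refine Finset.sum_congr rfl fun i _ ↦ ?_
  simp only [integral_finsetSum _ (hint i), integral_const_mul]

end Mixture

theorem energy_statistic_cdf_multiPU_general {ι : Type*} [Fintype ι] {N : ℕ} (hN : 0 < N) {c : ℝ}
    (hc : 0 < c) (a : ι → ℕ) {b : ι → ℝ} (hb : ∀ i, 0 < b i) (Ξ : ι → ℕ → ℝ) {f : ℝ → ℝ}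
    (hf : ∀ y ∈ Ioi c, f y = ∑ i, ∑ k ∈ Finset.Icc 1 (a i),
      Ξ i k * (y - c) ^ (k - 1) * exp (-(y - c) / b i) / (b i ^ k * (k - 1)!))
    (x : ℝ) :
    ∫ y in Ioi c, lowGamma N (N * x / (2 * y)) / (N - 1)! * f y
      = (∫ y in Ioi c, f y) - ∑ n ∈ Finset.range N, ∑ i, ∑ k ∈ Finset.Icc 1 (a i),
        ∑ j ∈ Finset.range k,
          (-c) ^ (k - 1 - j) * Ξ i k / (n ! * b i ^ ((k : ℤ) + n - j - 1) * (k - 1)!)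
            * (k - 1).choose j * (N * x / 2) ^ n * exp (c / b i)
            * extGamma (-(n : ℝ) + j + 1) (c / b i) (N * x / (2 * b i)) := by
  have hmix : EqOn f (shiftedErlangMixture c a b Ξ) (Ioi c) := fun y hy ↦ by
    simp only [hf y hy, shiftedErlangMixture, shiftedErlangPDF, mul_div_assoc, mul_assoc]
  rw [setIntegral_congr_fun measurableSet_Ioi hmix,
    setIntegral_congr_fun measurableSet_Ioi fun y hy ↦ congrArg (_ * ·) (hmix hy)]
  simp only [← div_div _ (2 : ℝ)]
  rw [integral_lowGamma_div_factorial_mul hN (integrableOn_shiftedErlangMixture hc a hb Ξ)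
    fun n _ ↦ integrableOn_poissonWeight_div_mul_shiftedErlangMixture hc a hb Ξ n _]
  congr 1
  refine Finset.sum_congr rfl fun n _ ↦ ?_
  rw [integral_poissonWeight_div_mul_shiftedErlangMixture hc a hb]
  refine Finset.sum_congr rfl fun i _ ↦ Finset.sum_congr rfl fun k hk ↦ ?_
  rw [integral_poissonWeight_div_mul_shiftedErlangPDF hc (hb i) (Finset.mem_Icc.1 hk).1,
    Finset.mul_sum]
  exact Finset.sum_congr rfl fun j _ ↦ by ring

end

/-- Theorem 1 of the paper: the unconditional CDF of the energy test statistic under `L`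
active primary users over Nakagami-m fading.  If the conditioning variance has the mixed
Gamma density `f` on `[c, ∞)` built from coefficients `Ξ i k`, shapes `a i` and scales
`b i`, and `∫_c^∞ f = 1`, then for every `x > 0` the unconditional CDF
`∫_c^∞ γ(N, N x / (2 y)) / (N-1)! · f y dy` equals the stated quadruple-sum closed form
in terms of the extended incomplete Gamma function. -/
theorem energy_statistic_cdf_multiPU (N L : ℕ) (hN : 0 < N) (hL : 0 < L)
    (c : ℝ) (hc : 0 < c) (a : Fin L → ℕ) (ha : ∀ i, 0 < a i)
    (b : Fin L → ℝ) (hb : ∀ i, 0 < b i) (Ξ : Fin L → ℕ → ℝ)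
    (f : ℝ → ℝ)
    (hf : ∀ y, f y = ∑ i : Fin L, ∑ k ∈ Finset.Icc 1 (a i),
        Ξ i k * (y - c) ^ (k - 1) * Real.exp (-(y - c) / b i)
          / ((b i) ^ k * (Nat.factorial (k - 1) : ℝ)))
    (hf1 : (∫ y in Set.Ioi c, f y) = 1) :
    ∀ x : ℝ, 0 < x →
      (∫ y in Set.Ioi c, (lowGamma N ((N : ℝ) * x / (2 * y))
            / (Nat.factorial (N - 1) : ℝ)) * f y)
        = 1 - ∑ n ∈ Finset.range N, ∑ i : Fin L, ∑ k ∈ Finset.Icc 1 (a i),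
            ∑ j ∈ Finset.range k,
              ((-c) ^ (k - 1 - j) * Ξ i k
                  / ((Nat.factorial n : ℝ) * (b i) ^ ((k : ℤ) + n - j - 1)
                    * (Nat.factorial (k - 1) : ℝ)))
                * ((k - 1).choose j : ℝ) * ((N : ℝ) * x / 2) ^ n
                * Real.exp (c / b i)
                * extGamma (-(n : ℝ) + j + 1) (c / b i) ((N : ℝ) * x / (2 * b i)) :=
  fun x _ ↦ by
    rw [energy_statistic_cdf_multiPU_general hN hc a hb Ξ (fun y _ ↦ hf y) x, hf1]
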